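/- arXiv:2008.00788 — 2 statements merged into one kernel-verified Lean document; each statement's English description precedes it below -/
import Mathlib

section
/- Let u be continuous on Σ_N^+ with finite energy (u ∈ dom E), and for m ≥ 0 let u_m = Σ_{p ∈ V_m} u(p) χ_p^m. Then E(u, u_m) = E_{H_m}(u_m|_{V_m}). -/
open Filter Topology MeasureTheory Finset Classical

noncomputable section

/-- The one-sided full shift space `Σ_N^+` on `N` symbols; coordinates are indexed
from `0`, so the paper's `x_1 x_2 ⋯` is `x 0, x 1, ⋯` here. It carries the product
of the discrete topology on `Fin N`. -/
abbrev SSp (N : ℕ) : Type := ℕ → Fin N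

/-- The level-`m` vertex set `V_m = {p : p_i = p_{i+1} for all i ≥ m+1}` (1-based),
i.e. the sequences that are constant from (0-based) coordinate `m` on.  It is
realized as a `Finset` via the parametrization by the first `m+1` coordinates;
see `mem_V` for the defining property. -/
noncomputable def V (N m : ℕ) : Finset (SSp N) :=
  (Finset.univ : Finset (Fin (m + 1) → Fin N)).image
    (fun w j => w ⟨min j m, by omega⟩)

lemma const_from (N m : ℕ) (p : SSp N) (h : ∀ i, m ≤ i → p i = p (i + 1)) :
    ∀ j, m ≤ j → p j = p m := by
  intro j hj
  induction j with
  | zero => have : m = 0 := by omega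
            simp [this]
  | succ k ih =>
      rcases Nat.lt_or_ge k m with hk | hk
      · have : m = k + 1 := by omega
        simp [this]
      · rw [← h k hk]
        exact ih hk

/-- Membership in `V N m` is exactly the paper's condition
`p_i = p_{i+1}` for all `i ≥ m+1` (1-based), i.e. `p i = p (i+1)` for all `i ≥ m`. -/
lemma mem_V {N m : ℕ} {p : SSp N} :
    p ∈ V N m ↔ ∀ i, m ≤ i → p i = p (i + 1) := by
  classical
  constructor
  · intro hp i hi
    simp only [V, Finset.mem_image] at hp
    obtain ⟨w, -, rfl⟩ := hp
    have h1 : min i m = m := by omega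
    have h2 : min (i + 1) m = m := by omega
    simp [h1, h2]
  · intro h
    simp only [V, Finset.mem_image]
    refine ⟨fun j => p j, Finset.mem_univ _, ?_⟩
    funext j
    rcases Nat.lt_or_ge j m with hj | hj
    · have : min j m = j := by omega
      simp [this]
    · have : min j m = m := by omega
      simp only [this]
      exact (const_from N m p h j hj).symm

/-- The deleted neighbourhood `U_{p,m} = {q ∈ V_m : q ≠ p, q_i = p_i for 1 ≤ i ≤ m}`
(1-based), i.e. `q` agrees with `p` on the first `m` (0-based: `i < m`) coordinates. -/
noncomputable def U (N m : ℕ) (p : SSp N) : Finset (SSp N) :=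
  (V N m).filter (fun q => q ≠ p ∧ ∀ i, i < m → q i = p i)

/-- `κ_p = min {j : p ∈ V_j}`. -/
noncomputable def kappa (N : ℕ) (p : SSp N) : ℕ := sInf {j | p ∈ V N j}

/-- The difference operator
`H_m u (p) = Σ_{i = κ_p}^{m} Σ_{q ∈ U_{p,i}} (u(q) − u(p))`. -/
noncomputable def H (N m : ℕ) (u : SSp N → ℝ) (p : SSp N) : ℝ :=
  ∑ i ∈ Finset.Icc (kappa N p) m, ∑ q ∈ U N i p, (u q - u p)

/-- The Dirichlet form `E_{H_m}(u, v) = − Σ_{p ∈ V_m} u(p) · H_m v(p)`. -/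
noncomputable def EH (N m : ℕ) (u v : SSp N → ℝ) : ℝ :=
  -∑ p ∈ V N m, u p * H N m v p

/-- The cylinder set `[p_1 ⋯ p_m]`, determined by the first `m` coordinates of `p`. -/
def cyl (N m : ℕ) (p : SSp N) : Set (SSp N) := {x | ∀ i, i < m → x i = p i}

/-- `χ_p^m` : the indicator function of the cylinder set `[p_1 ⋯ p_{m+1}]`. -/
noncomputable def chi (N m : ℕ) (p : SSp N) : SSp N → ℝ :=
  (cyl N (m + 1) p).indicator 1

/-- `u ∈ dom E`: `u` is continuous and the energy
`E(u) = lim_m E_{H_m}(u|_{V_m})` exists (and is finite). -/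
def MemDomE (N : ℕ) (u : SSp N → ℝ) : Prop :=
  Continuous u ∧ ∃ L : ℝ, Tendsto (fun m => EH N m u u) atTop (nhds L)

/-- `v ∈ dom_M E`: `v` has finite energy and vanishes on the boundary `V_M`. -/
def MemDomME (N M : ℕ) (v : SSp N → ℝ) : Prop :=
  MemDomE N v ∧ ∀ p ∈ V N M, v p = 0

/-- `u ∈ 𝒟_M` with `Δ u = f` (strong formulation with boundary `V_M`):
`u` and `f` are continuous and
`lim_{m → ∞} max_{p ∈ V_m ∖ V_M} |N^{m+1} H_m u(p) − f(p)| = 0`. -/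
def IsLaplacianOn (N M : ℕ) (u f : SSp N → ℝ) : Prop :=
  Continuous u ∧ Continuous f ∧
    ∀ ε : ℝ, 0 < ε → ∃ m₀ : ℕ, ∀ m, m₀ ≤ m → ∀ p ∈ V N m, p ∉ V N M →
      |(N : ℝ) ^ (m + 1) * H N m u p - f p| < ε

/-- `u ∈ D_μ` with `Δ u = f` (original definition of the Laplacian):
`u` and `f` are continuous and
`lim_{m → ∞} max_{p ∈ V_m ∖ V_{m−1}} |N^{m+1} H_m u(p) − f(p)| = 0`
(the level is written `m+1` to avoid natural subtraction). -/
def IsLaplacianDmu (N : ℕ) (u f : SSp N → ℝ) : Prop :=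
  Continuous u ∧ Continuous f ∧
    ∀ ε : ℝ, 0 < ε → ∃ m₀ : ℕ, ∀ m, m₀ ≤ m → ∀ p ∈ V N (m + 1), p ∉ V N m →
      |(N : ℝ) ^ (m + 2) * H N (m + 1) u p - f p| < ε

/-- `μ` is the equidistributed Bernoulli measure:
`μ([p_1 ⋯ p_m]) = N^{−m}` for every cylinder set. -/
def IsBernoulli (N : ℕ) (μ : Measure (SSp N)) : Prop :=
  ∀ (m : ℕ) (p : SSp N), μ (cyl N m p) = (N : ENNReal)⁻¹ ^ m

/-- `ρ(x,y) = min {i : x_i ≠ y_i}` (1-based; `0`-based first disagreement plus one). -/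
noncomputable def rho (N : ℕ) (x y : SSp N) : ℕ := sInf {i | x i ≠ y i} + 1

/-- The matrix `(G_m)_{pq}`: `2/N` if `q = p`, `1/N` if `q ∈ U_{p,m}`, `0` otherwise. -/
noncomputable def Gmat (N m : ℕ) (p q : SSp N) : ℝ :=
  if q = p then 2 / N else if q ∈ U N m p then 1 / N else 0

/-- The Green's function
`g(x,y) = Σ_{m=1}^{ρ(x,y)−1} Σ_{r,s ∈ V_m ∖ V_{m−1}} (G_m)_{rs} χ_r^m(x) χ_s^m(y)`
for `ρ(x,y) > 1`, and `g(x,y) = 0` for `ρ(x,y) = 1` (the sum is then empty). -/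
noncomputable def greenFn (N : ℕ) (x y : SSp N) : ℝ :=
  ∑ m ∈ Finset.Icc 1 (rho N x y - 1),
    ∑ r ∈ (V N m).filter (fun r => r ∉ V N (m - 1)),
      ∑ s ∈ (V N m).filter (fun s => s ∉ V N (m - 1)),
        Gmat N m r s * chi N m r x * chi N m s y

/-- The Green's operator `G_μ f (x) = ∫_{Σ_N^+ ∖ {x}} g(x,y) f(y) dμ(y)`. -/
noncomputable def Gop (N : ℕ) (μ : Measure (SSp N)) (f : SSp N → ℝ) (x : SSp N) : ℝ :=
  ∫ y in ({x}ᶜ : Set (SSp N)), greenFn N x y * f y ∂μ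

/-!
The interpolant `u_m` depends only on the first `m + 1` coordinates, so its differences over
`U_{p,i}` vanish for `i > m` and `H_n u_m = H_m u_m` for `n ≥ m`. This common value is `0` at the
vertices outside `V_m`, where `κ_p > m` leaves no summand. Hence the forms `E_{H_n}(v, u_m)` are
constant for `n ≥ m`, and on `V_m` the function `v` may be replaced by its interpolant `v_m`.
-/

section

variable {N m n : ℕ} {u v : SSp N → ℝ} {p q : SSp N}

lemma V_mono : Monotone (V N) :=
  fun _ _ hmn _ hp => mem_V.2 fun i hi => mem_V.1 hp i (hmn.trans hi)

lemma eq_of_mem_V_of_eqOn_Iic (hp : p ∈ V N m) (hq : q ∈ V N m) (h : Set.EqOn p q (Set.Iic m)) :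
    p = q := by
  funext j
  rcases le_total j m with hj | hj
  · exact h hj
  · rw [const_from N m p (mem_V.1 hp) j hj, const_from N m q (mem_V.1 hq) j hj]
    exact h Set.self_mem_Iic

lemma lt_kappa_of_notMem_V (hn : p ∈ V N n) (hm : p ∉ V N m) : m < kappa N p := by
  by_contra! hle
  have hmem : p ∈ V N (kappa N p) := Nat.sInf_mem (s := {j | p ∈ V N j}) ⟨n, hn⟩
  exact hm (V_mono hle hmem)

lemma H_eq_zero_of_notMem_V (v : SSp N → ℝ) (hn : p ∈ V N n) (hm : p ∉ V N m) :
    H N m v p = 0 := by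
  rw [H, Finset.Icc_eq_empty (lt_kappa_of_notMem_V hn hm).not_ge, Finset.sum_empty]

lemma H_eq_of_dependsOn_Iic (hv : DependsOn v (Set.Iic m)) (hmn : m ≤ n) (p : SSp N) :
    H N n v p = H N m v p := by
  refine (Finset.sum_subset (Finset.Icc_subset_Icc_right hmn) fun i hi hi' => ?_).symm
  have hmi : m < i := by
    simp only [Finset.mem_Icc] at hi hi'
    omega
  refine Finset.sum_eq_zero fun q hq => sub_eq_zero.2 (hv fun j hj => ?_)
  exact (Finset.mem_filter.1 hq).2.2 j (lt_of_le_of_lt hj hmi)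

lemma EH_eq_of_dependsOn_Iic (u : SSp N → ℝ) (hv : DependsOn v (Set.Iic m)) (hmn : m ≤ n) :
    EH N n u v = EH N m u v := by
  simp only [EH, H_eq_of_dependsOn_Iic hv hmn]
  congr 1
  refine (Finset.sum_subset (V_mono hmn) fun p hn hm => ?_).symm
  rw [H_eq_zero_of_notMem_V v hn hm, mul_zero]

lemma EH_congr_left {u' : SSp N → ℝ} (h : Set.EqOn u u' (V N m)) (v : SSp N → ℝ) :
    EH N m u v = EH N m u' v :=
  congrArg Neg.neg (Finset.sum_congr rfl fun p hp => by rw [h hp])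

lemma dependsOn_chi (p : SSp N) : DependsOn (chi N m p) (Set.Iic m) := by
  intro x y hxy
  have hmem : x ∈ cyl N (m + 1) p ↔ y ∈ cyl N (m + 1) p :=
    forall₂_congr fun i hi => by rw [hxy i (Nat.le_of_lt_succ hi)]
  simp only [chi, Set.indicator, hmem, Pi.one_apply]

lemma chi_apply_of_mem_V (hp : p ∈ V N m) (hq : q ∈ V N m) :
    chi N m p q = if p = q then 1 else 0 := by
  have hmem : q ∈ cyl N (m + 1) p ↔ p = q := by
    refine ⟨fun h => ?_, by rintro rfl; exact fun _ _ => rfl⟩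
    exact (eq_of_mem_V_of_eqOn_Iic hq hp fun i hi => h i (Nat.lt_succ_of_le hi)).symm
  simp only [chi, Set.indicator, hmem, Pi.one_apply]

/-- The simple function `u_m = Σ_{p ∈ V_m} u(p) χ_p^m`, which interpolates `u` on `V_m` and is
constant on the cylinder sets of length `m + 1`. -/
def cylInterp (N m : ℕ) (u : SSp N → ℝ) : SSp N → ℝ :=
  fun x => ∑ p ∈ V N m, u p * chi N m p x

lemma dependsOn_cylInterp (u : SSp N → ℝ) : DependsOn (cylInterp N m u) (Set.Iic m) :=
  fun _ _ hxy => Finset.sum_congr rfl fun p _ => by rw [dependsOn_chi p hxy]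

lemma eqOn_cylInterp (u : SSp N → ℝ) : Set.EqOn (cylInterp N m u) u (V N m) := by
  intro q hq
  calc cylInterp N m u q
      = ∑ p ∈ V N m, u p * if p = q then 1 else 0 :=
        Finset.sum_congr rfl fun p hp => by rw [chi_apply_of_mem_V hp hq]
    _ = u q := by
        simp only [mul_ite, mul_one, mul_zero, Finset.sum_ite_eq']
        exact if_pos hq

theorem statement3_general (u v : SSp N → ℝ) (hmn : m ≤ n) :
    EH N n v (cylInterp N m u) = EH N m (cylInterp N m v) (cylInterp N m u) :=
  calc EH N n v (cylInterp N m u)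
      = EH N m v (cylInterp N m u) := EH_eq_of_dependsOn_Iic v (dependsOn_cylInterp u) hmn
    _ = EH N m (cylInterp N m v) (cylInterp N m u) :=
        EH_congr_left (eqOn_cylInterp v).symm _

end

/-- For `u ∈ dom E` and `u_m = Σ_{p ∈ V_m} u(p) χ_p^m`,
one has `E(u, u_m) = E_{H_m}(u_m)`. -/
theorem statement3 (N : ℕ) (hN : 2 ≤ N) (u : SSp N → ℝ) (hu : MemDomE N u) (m : ℕ) :
    Tendsto (fun n => EH N n u (fun x => ∑ p ∈ V N m, u p * chi N m p x)) atTop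
      (nhds (EH N m (fun x => ∑ p ∈ V N m, u p * chi N m p x)
                    (fun x => ∑ p ∈ V N m, u p * chi N m p x))) :=
  tendsto_const_nhds.congr' <| (eventually_ge_atTop m).mono fun _ hmn =>
    (statement3_general u u hmn).symm
end
end

section
/- Every harmonic function in D is an energy minimizer: if M ≥ 0 and h ∈ D_M satisfies Δh = 0 (i.e. lim_{m→∞} max_{p ∈ V_m ∖ V_M} |N^{m+1} H_m h(p)| = 0), then h is constant on every cylinder set of length M+1. -/
open Filter Topology MeasureTheory Finset Classical

noncomputable section

/-!
Subtracting from `h` its values at the truncations to the first `M + 1` coordinates gives a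
harmonic function `v` that vanishes on `V_M`, because a function of the first `M + 1` coordinates
is annihilated by `H_m` off `V_M`. Summing by parts, `E_{H_m}(v, v)` is a sum of squares over the
edges of all levels `≤ m`, hence nonnegative and nondecreasing in `m`. On the other hand,
`|V_m| ≤ N^{m+1}` and `N^{m+1} H_m v → 0` uniformly off `V_M`, so `E_{H_m}(v, v) → 0`. All these
energies are therefore zero, and `v` is constant on each `V_m`; since it vanishes on `V_M` and
`⋃ V_m` is dense, `v = 0`.
-/

lemma two_mul_sum_mul_sum_sub_of_symm {ι R : Type*} [CommRing R] {s : Finset ι}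
    {t : ι → Finset ι} (hsymm : ∀ p q, p ∈ s ∧ q ∈ t p ↔ p ∈ t q ∧ q ∈ s) (u v : ι → R) :
    2 * ∑ p ∈ s, u p * ∑ q ∈ t p, (v q - v p) =
      -∑ p ∈ s, ∑ q ∈ t p, (u q - u p) * (v q - v p) := by
  have hswap : ∑ p ∈ s, ∑ q ∈ t p, u p * (v q - v p) =
      ∑ p ∈ s, ∑ q ∈ t p, u q * (v p - v q) :=
    sum_comm' hsymm
  simp only [mul_sum (t _)]
  rw [two_mul]
  nth_rw 2 [hswap]
  simp only [← sum_add_distrib, ← sum_neg_distrib]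
  exact sum_congr rfl fun p _ => sum_congr rfl fun q _ => by ring

section Trunc

variable {α : Type*}

/-- The truncation of a sequence at level `m`: it agrees with `x` up to the (0-based) coordinate `m`
and is constant from there on. It is the retraction of the shift space onto `V_m`. -/
def trunc (m : ℕ) (x : ℕ → α) : ℕ → α := fun j => x (min j m)

lemma trunc_apply_of_le {m i : ℕ} (x : ℕ → α) (hi : i ≤ m) : trunc m x i = x i := by
  rw [trunc, min_eq_left hi]

lemma dependsOn_trunc (m : ℕ) : DependsOn (trunc (α := α) m) (Set.Iic m) :=
  fun _ _ hxy => funext fun j => hxy _ (min_le_right j m)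

variable [TopologicalSpace α]

lemma continuous_trunc (m : ℕ) : Continuous (trunc (α := α) m) :=
  continuous_pi fun _ => continuous_apply _

lemma tendsto_trunc (x : ℕ → α) : Tendsto (fun m => trunc m x) atTop (𝓝 x) := by
  refine tendsto_pi_nhds.2 fun i => tendsto_const_nhds.congr' ?_
  filter_upwards [eventually_ge_atTop i] with m hm
  exact (trunc_apply_of_le x hm).symm

end Trunc

variable {N M m : ℕ} {p q : SSp N} {f g u v : SSp N → ℝ}

lemma trunc_mem_V (m : ℕ) (x : SSp N) : trunc m x ∈ V N m :=
  mem_V.2 fun i hi => by simp only [trunc, min_eq_right hi, min_eq_right (Nat.le_succ_of_le hi)]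

lemma trunc_eq_self (hp : p ∈ V N m) : trunc m p = p := by
  funext j
  rcases le_total j m with hj | hj
  · exact trunc_apply_of_le p hj
  · rw [trunc, min_eq_right hj, const_from N m p (mem_V.1 hp) j hj]

lemma monotone_V (N : ℕ) : Monotone (V N) :=
  fun _ _ hmn _ hp => mem_V.2 fun i hi => mem_V.1 hp i (hmn.trans hi)

lemma card_V_le (N m : ℕ) : #(V N m) ≤ N ^ (m + 1) :=
  card_image_le.trans (by simp)

lemma dense_iUnion_V (N : ℕ) : Dense (⋃ m, (V N m : Set (SSp N))) := fun x =>
  mem_closure_of_tendsto (tendsto_trunc x) <|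
    .of_forall fun m => Set.mem_iUnion_of_mem m (trunc_mem_V m x)

lemma kappa_le_iff_mem_V {i : ℕ} (hp : p ∈ V N m) : kappa N p ≤ i ↔ p ∈ V N i :=
  ⟨fun hi => monotone_V N hi (Nat.sInf_mem (s := {j | p ∈ V N j}) ⟨m, hp⟩),
    fun hi => Nat.sInf_le hi⟩

lemma mem_U : q ∈ U N m p ↔ q ∈ V N m ∧ q ≠ p ∧ ∀ i, i < m → q i = p i := by
  rw [U, mem_filter]

lemma mem_V_and_mem_U_comm (p q : SSp N) : p ∈ V N m ∧ q ∈ U N m p ↔ p ∈ U N m q ∧ q ∈ V N m := by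
  simp only [mem_U, eq_comm, ne_comm]
  tauto

lemma trunc_mem_U (hne : trunc m p ≠ p) : trunc m p ∈ U N (m + 1) p :=
  mem_U.2 ⟨monotone_V N m.le_succ (trunc_mem_V m p), hne,
    fun _ hi => trunc_apply_of_le p (Nat.le_of_lt_succ hi)⟩

lemma trunc_eq_trunc_of_mem_U (hMm : M < m) (hq : q ∈ U N m p) : trunc M q = trunc M p :=
  dependsOn_trunc M fun i hi => (mem_U.1 hq).2.2 i (lt_of_le_of_lt hi hMm)

lemma H_sub (N m : ℕ) (u v : SSp N → ℝ) (p : SSp N) :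
    H N m (u - v) p = H N m u p - H N m v p := by
  simp only [H, ← sum_sub_distrib, Pi.sub_apply]
  exact sum_congr rfl fun i _ => sum_congr rfl fun q _ => by ring

lemma H_comp_trunc_eq_zero (g : SSp N → ℝ) (hp : p ∈ V N m) (hpM : p ∉ V N M) :
    H N m (g ∘ trunc M) p = 0 := by
  have hMκ : M < kappa N p := not_le.1 fun hle => hpM ((kappa_le_iff_mem_V hp).1 hle)
  refine sum_eq_zero fun i hi => sum_eq_zero fun q hq => sub_eq_zero.2 ?_
  exact congrArg g (trunc_eq_trunc_of_mem_U (hMκ.trans_le (mem_Icc.1 hi).1) hq)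

lemma IsLaplacianOn.sub (hu : IsLaplacianOn N M u f) (hv : IsLaplacianOn N M v g) :
    IsLaplacianOn N M (u - v) (f - g) := by
  obtain ⟨hu_cont, hf_cont, hu_lim⟩ := hu
  obtain ⟨hv_cont, hg_cont, hv_lim⟩ := hv
  refine ⟨hu_cont.sub hv_cont, hf_cont.sub hg_cont, fun ε hε => ?_⟩
  obtain ⟨m₁, hm₁⟩ := hu_lim (ε / 2) (half_pos hε)
  obtain ⟨m₂, hm₂⟩ := hv_lim (ε / 2) (half_pos hε)
  refine ⟨max m₁ m₂, fun m hm p hp hpM => ?_⟩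
  rw [H_sub, mul_sub, Pi.sub_apply, sub_sub_sub_comm]
  have hu_lt := hm₁ m (le_of_max_le_left hm) p hp hpM
  have hv_lt := hm₂ m (le_of_max_le_right hm) p hp hpM
  exact (abs_sub _ _).trans_lt ((add_lt_add hu_lt hv_lt).trans_eq (add_halves ε))

lemma isLaplacianOn_comp_trunc (M : ℕ) (hg : Continuous g) :
    IsLaplacianOn N M (g ∘ trunc M) 0 := by
  refine ⟨hg.comp (continuous_trunc M), continuous_zero, fun ε hε => ⟨0, fun m _ p hp hpM => ?_⟩⟩
  simpa [H_comp_trunc_eq_zero g hp hpM] using hε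

/-- The contribution of the edges of level `i` to the Dirichlet form: every unordered pair
`{p, q}` with `q ∈ U_{p,i}` is counted twice in the sum, hence the factor `1 / 2`. -/
def levelForm (N i : ℕ) (u v : SSp N → ℝ) : ℝ :=
  1 / 2 * ∑ p ∈ V N i, ∑ q ∈ U N i p, (u q - u p) * (v q - v p)

lemma levelForm_self_nonneg (N i : ℕ) (v : SSp N → ℝ) : 0 ≤ levelForm N i v v :=
  mul_nonneg (by norm_num) (sum_nonneg fun _ _ => sum_nonneg fun _ _ => mul_self_nonneg _)

lemma eq_of_levelForm_self_eq_zero (hv : levelForm N m v v = 0) (hp : p ∈ V N m)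
    (hq : q ∈ U N m p) : v q = v p := by
  have hsum : ∑ p ∈ V N m, ∑ q ∈ U N m p, (v q - v p) * (v q - v p) = 0 :=
    (mul_eq_zero_iff_left (by norm_num)).1 hv
  rw [sum_eq_zero_iff_of_nonneg fun _ _ => sum_nonneg fun _ _ => mul_self_nonneg _] at hsum
  have hsum_p := hsum p hp
  rw [sum_eq_zero_iff_of_nonneg fun _ _ => mul_self_nonneg _] at hsum_p
  exact sub_eq_zero.1 (mul_self_eq_zero.1 (hsum_p q hq))

lemma EH_eq_sum_levelForm (N m : ℕ) (u v : SSp N → ℝ) :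
    EH N m u v = ∑ i ∈ range (m + 1), levelForm N i u v := by
  have hlevels : ∑ p ∈ V N m, ∑ i ∈ Icc (kappa N p) m, u p * ∑ q ∈ U N i p, (v q - v p) =
      ∑ i ∈ range (m + 1), ∑ p ∈ V N i, u p * ∑ q ∈ U N i p, (v q - v p) := by
    refine sum_comm' fun p i => ?_
    simp only [mem_Icc, mem_range, Nat.lt_succ_iff]
    constructor
    · rintro ⟨hp, hκ, him⟩
      exact ⟨(kappa_le_iff_mem_V hp).1 hκ, him⟩
    · rintro ⟨hp, him⟩
      exact ⟨monotone_V N him hp, (kappa_le_iff_mem_V hp).2 hp, him⟩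
  simp only [EH, H, mul_sum (Icc _ _)]
  rw [hlevels, ← sum_neg_distrib]
  refine sum_congr rfl fun i _ => ?_
  rw [levelForm]
  linarith [two_mul_sum_mul_sum_sub_of_symm (mem_V_and_mem_U_comm (m := i)) u v]

lemma EH_self_nonneg (N m : ℕ) (v : SSp N → ℝ) : 0 ≤ EH N m v v := by
  rw [EH_eq_sum_levelForm]
  exact sum_nonneg fun i _ => levelForm_self_nonneg N i v

lemma monotone_EH_self (v : SSp N → ℝ) : Monotone fun m => EH N m v v :=
  monotone_nat_of_le_succ fun m => by
    rw [EH_eq_sum_levelForm, EH_eq_sum_levelForm, sum_range_succ _ (m + 1)]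
    exact le_add_of_nonneg_right (levelForm_self_nonneg N (m + 1) v)

lemma eq_of_EH_self_eq_zero (hv : EH N m v v = 0) (hp : p ∈ V N m) (hq : q ∈ V N m) :
    v p = v q := by
  rw [EH_eq_sum_levelForm,
    sum_eq_zero_iff_of_nonneg fun i _ => levelForm_self_nonneg N i v] at hv
  induction m generalizing p q with
  | zero =>
    by_cases hpq : p = q
    · rw [hpq]
    · exact eq_of_levelForm_self_eq_zero (hv 0 (self_mem_range_succ 0)) hq
        (mem_U.2 ⟨hp, hpq, fun i hi => absurd hi i.not_lt_zero⟩)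
  | succ m ih =>
    have htrunc : ∀ r ∈ V N (m + 1), v (trunc m r) = v r := by
      intro r hr
      by_cases heq : trunc m r = r
      · rw [heq]
      · exact eq_of_levelForm_self_eq_zero (hv _ (self_mem_range_succ _)) hr (trunc_mem_U heq)
    rw [← htrunc p hp, ← htrunc q hq]
    exact ih (fun i hi => hv i (range_subset_range.2 m.succ.le_succ hi))
      (trunc_mem_V m p) (trunc_mem_V m q)

section WeakFormulation

variable [NeZero N]

lemma abs_EH_add_riemannSum_le {C δ : ℝ} (hδ : 0 ≤ δ) (hvC : ∀ x, |v x| ≤ C)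
    (hvM : ∀ p ∈ V N M, v p = 0)
    (hu : ∀ p ∈ V N m, p ∉ V N M → |(N : ℝ) ^ (m + 1) * H N m u p - f p| ≤ δ) :
    |EH N m v u + (∑ p ∈ V N m, v p * f p) / (N : ℝ) ^ (m + 1)| ≤ C * δ := by
  have hpow : (0 : ℝ) < (N : ℝ) ^ (m + 1) := by have := NeZero.pos N; positivity
  have hC : 0 ≤ C := (abs_nonneg _).trans (hvC 0)
  have hsum : EH N m v u + (∑ p ∈ V N m, v p * f p) / (N : ℝ) ^ (m + 1) =
      -(∑ p ∈ V N m, v p * ((N : ℝ) ^ (m + 1) * H N m u p - f p)) / (N : ℝ) ^ (m + 1) := by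
    simp only [EH, mul_sub, sum_sub_distrib, mul_left_comm (v _), ← mul_sum]
    field_simp
    ring
  have hterm : ∀ p ∈ V N m, |v p * ((N : ℝ) ^ (m + 1) * H N m u p - f p)| ≤ C * δ := by
    intro p hp
    by_cases hpM : p ∈ V N M
    · rw [hvM p hpM, zero_mul, abs_zero]
      positivity
    · rw [abs_mul]
      exact mul_le_mul (hvC p) (hu p hp hpM) (abs_nonneg _) hC
  rw [hsum, abs_div, abs_neg, abs_of_pos hpow, div_le_iff₀ hpow]
  calc |∑ p ∈ V N m, v p * ((N : ℝ) ^ (m + 1) * H N m u p - f p)|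
      ≤ ∑ p ∈ V N m, |v p * ((N : ℝ) ^ (m + 1) * H N m u p - f p)| := abs_sum_le_sum_abs _ _
    _ ≤ #(V N m) * (C * δ) := by
        rw [← nsmul_eq_mul]
        exact sum_le_card_nsmul _ _ _ hterm
    _ ≤ C * δ * (N : ℝ) ^ (m + 1) := by
        rw [mul_comm]
        gcongr
        exact_mod_cast card_V_le N m

/-- This is the passage from the strong to the weak formulation of `Δu = f`: the Riemann sums tend
to the integral of `v * f` for the equidistributed Bernoulli measure. -/
lemma IsLaplacianOn.tendsto_EH_add_riemannSum (hu : IsLaplacianOn N M u f) {C : ℝ}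
    (hvC : ∀ x, |v x| ≤ C) (hvM : ∀ p ∈ V N M, v p = 0) :
    Tendsto (fun m => EH N m v u + (∑ p ∈ V N m, v p * f p) / (N : ℝ) ^ (m + 1)) atTop
      (𝓝 0) := by
  refine Metric.tendsto_atTop.2 fun ε hε => ?_
  obtain ⟨δ, hδ, hCδ⟩ := exists_pos_mul_lt hε C
  obtain ⟨m₀, hm₀⟩ := hu.2.2 δ hδ
  refine ⟨m₀, fun m hm => ?_⟩
  rw [Real.dist_0_eq_abs]
  exact (abs_EH_add_riemannSum_le hδ.le hvC hvM fun p hp hpM => (hm₀ m hm p hp hpM).le).trans_lt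
    hCδ

lemma IsLaplacianOn.EH_self_eq_zero (hv : IsLaplacianOn N M v 0) (hvM : ∀ p ∈ V N M, v p = 0)
    (m : ℕ) : EH N m v v = 0 := by
  obtain ⟨C, hC⟩ := isCompact_univ.exists_bound_of_continuousOn hv.1.continuousOn
  have hlim : Tendsto (fun m => EH N m v v) atTop (𝓝 0) := by
    simpa using hv.tendsto_EH_add_riemannSum (fun x => hC x (Set.mem_univ x)) hvM
  exact le_antisymm ((monotone_EH_self v).ge_of_tendsto hlim m) (EH_self_nonneg N m v)

theorem IsLaplacianOn.eq_zero (hv : IsLaplacianOn N M v 0) (hvM : ∀ p ∈ V N M, v p = 0) :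
    v = 0 := by
  refine hv.1.ext_on (dense_iUnion_V N) continuous_zero fun p hp => ?_
  obtain ⟨m, hpm⟩ := Set.mem_iUnion.1 hp
  calc v p = v (trunc M p) :=
        eq_of_EH_self_eq_zero (hv.EH_self_eq_zero hvM (max m M))
          (monotone_V N (le_max_left m M) hpm) (monotone_V N (le_max_right m M) (trunc_mem_V M p))
    _ = 0 := hvM _ (trunc_mem_V M p)

end WeakFormulation

/-- every harmonic function in `𝒟` is an energy minimizer: if
`h ∈ 𝒟_M` satisfies `Δh = 0`, then `h` is constant on every cylinder set of
length `M+1`. -/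
theorem statement9 (N : ℕ) (hN : 2 ≤ N) (M : ℕ) (h : SSp N → ℝ)
    (hh : IsLaplacianOn N M h (fun _ => 0)) :
    ∀ x y : SSp N, (∀ i, i < M + 1 → x i = y i) → h x = h y := by
  have : NeZero N := ⟨by omega⟩
  have hdiff : IsLaplacianOn N M (h - h ∘ trunc M) 0 := by
    simpa only [sub_zero] using IsLaplacianOn.sub (f := 0) hh (isLaplacianOn_comp_trunc M hh.1)
  have hzero : h - h ∘ trunc M = 0 := hdiff.eq_zero fun p hp => by simp [trunc_eq_self hp]
  have hfactor : ∀ x, h x = h (trunc M x) := congrFun (sub_eq_zero.1 hzero)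
  intro x y hxy
  have htrunc : trunc M x = trunc M y :=
    dependsOn_trunc M fun i hi => hxy i (Nat.lt_succ_of_le hi)
  rw [hfactor x, hfactor y, htrunc]
end
end
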